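/- Let X be a real Banach space and let δ, δ₀, c₀, r₀ > 0. Let μ : [0,∞) → (0,∞) be continuously differentiable with μ′(s) + δ μ(s) ≤ 0 for all s ≥ 0. Let f : [0,∞) → X be continuous and satisfy ‖f(r)‖² ≤ c₀ e^{δ₀ r} for all r ≥ r₀. For ε > 0 set μ_ε(s) = ε^{−2} μ(s/ε). Then limsup_{ε → 0⁺} ∫₀^∞ μ_ε(s) ‖∫₀ˢ f(r) dr‖² ds < ∞, where the inner integral is a Bochner integral. -/

import Mathlib

open MeasureTheory Filter
open scoped ENNReal Topology

/-- For an exponentially decaying memory kernel `μ` and a continuous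
trajectory `f` with at most exponential-square growth, the rescaled-kernel energies
`∫₀^∞ μ_ε(s) ‖∫₀ˢ f(r) dr‖² ds`, where `μ_ε(s) = ε⁻² μ(s/ε)`, remain bounded in the
limit `ε → 0⁺`. -/
theorem limsup_rescaled_memory_energy_lt_top
    {X : Type*} [NormedAddCommGroup X] [NormedSpace ℝ X] [CompleteSpace X]
    (δ δ₀ c₀ r₀ : ℝ) (hδ : 0 < δ) (hδ₀ : 0 < δ₀) (hc₀ : 0 < c₀) (hr₀ : 0 < r₀)
    (μ μ' : ℝ → ℝ)
    (hpos : ∀ s, 0 ≤ s → 0 < μ s)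
    (hderiv : ∀ s, 0 ≤ s → HasDerivAt μ (μ' s) s)
    (hcont : ContinuousOn μ' (Set.Ici 0))
    (hdiss : ∀ s, 0 ≤ s → μ' s + δ * μ s ≤ 0)
    (f : ℝ → X) (hf : Continuous f)
    (hgrow : ∀ r, r₀ ≤ r → ‖f r‖ ^ 2 ≤ c₀ * Real.exp (δ₀ * r)) :
    Filter.limsup
      (fun ε : ℝ =>
        ∫⁻ s in Set.Ioi (0 : ℝ),
          ENNReal.ofReal ((1 / ε ^ 2) * μ (s / ε) * ‖∫ r in (0 : ℝ)..s, f r‖ ^ 2))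
      (𝓝[>] (0 : ℝ)) < ⊤ := by
  have hmu : ∀ s, 0 ≤ s → μ s ≤ μ 0 * Real.exp (-(δ * s)) := by
    have hd : ∀ s, 0 ≤ s → HasDerivAt (fun s => μ s * Real.exp (δ * s))
        (μ' s * Real.exp (δ * s) + μ s * (Real.exp (δ * s) * (δ * 1))) s := fun s hs =>
      (hderiv s hs).mul (((hasDerivAt_id s).const_mul δ).exp)
    have hanti : AntitoneOn (fun s => μ s * Real.exp (δ * s)) (Set.Ici 0) := by
      apply antitoneOn_of_deriv_nonpos (convex_Ici 0)
      · exact fun s hs => (hd s hs).continuousAt.continuousWithinAt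
      · intro s hs
        rw [interior_Ici] at hs
        exact (hd s (le_of_lt hs)).differentiableAt.differentiableWithinAt
      · intro s hs
        rw [interior_Ici] at hs
        rw [(hd s (le_of_lt hs)).deriv]
        have h1 := hdiss s (le_of_lt hs)
        have h2 := Real.exp_pos (δ * s)
        nlinarith
    intro s hs
    have h := hanti (Set.mem_Ici.2 le_rfl) (Set.mem_Ici.2 hs) hs
    simp only [mul_zero, Real.exp_zero, mul_one] at h
    rw [Real.exp_neg, ← div_eq_mul_inv, le_div_iff₀ (Real.exp_pos _)]
    exact h
  obtain ⟨K, hK0, hK⟩ : ∃ K : ℝ, 0 ≤ K ∧ ∀ r, 0 ≤ r → ‖f r‖ ≤ K * Real.exp (δ₀ * r) := by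
    obtain ⟨M, hM⟩ := (isCompact_Icc (a := (0:ℝ)) (b := r₀)).exists_bound_of_continuousOn
      hf.continuousOn
    have hM0 : 0 ≤ M := (norm_nonneg _).trans (hM 0 ⟨le_rfl, hr₀.le⟩)
    refine ⟨M + (c₀ + 1), by linarith, fun r hr => ?_⟩
    have he : 1 ≤ Real.exp (δ₀ * r) := Real.one_le_exp (by positivity)
    rcases le_total r r₀ with h | h
    · have := hM r ⟨hr, h⟩
      nlinarith
    · have h1 := hgrow r h
      have h2 : ‖f r‖ ≤ (c₀ + 1) * Real.exp (δ₀ * r) := by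
        refine (sq_le_sq₀ (norm_nonneg _) (by positivity)).1 ?_
        refine h1.trans ?_
        rw [mul_pow]
        apply mul_le_mul <;> nlinarith [Real.exp_pos (δ₀ * r)]
      nlinarith
  have hint : ∀ s, 0 ≤ s → ‖∫ r in (0 : ℝ)..s, f r‖ ≤ K * Real.exp (δ₀ * s) * s := by
    intro s hs
    have := intervalIntegral.norm_integral_le_of_norm_le_const (a := 0) (b := s) (f := f)
      (C := K * Real.exp (δ₀ * s)) (by
        intro x hx
        rw [Set.uIoc_of_le hs] at hx
        refine (hK x hx.1.le).trans ?_
        have := hx.2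
        gcongr)
    rwa [sub_zero, abs_of_nonneg hs] at this
  have hμ0 := hpos 0 le_rfl
  set C : ℝ := μ 0 * K ^ 2 * (32 / δ ^ 2) with hC
  have hC0 : 0 ≤ C := by positivity
  have hbd : ∀ᶠ ε : ℝ in 𝓝[>] (0 : ℝ), (∫⁻ s in Set.Ioi (0 : ℝ),
          ENNReal.ofReal ((1 / ε ^ 2) * μ (s / ε) * ‖∫ r in (0 : ℝ)..s, f r‖ ^ 2)) ≤
      ∫⁻ s in Set.Ioi (0 : ℝ), ENNReal.ofReal (C * Real.exp (-(δ / 4) * s)) := by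
    have hmem : Set.Ioo (0 : ℝ) (min 1 (δ / (4 * δ₀))) ∈ 𝓝[>] (0 : ℝ) :=
      Ioo_mem_nhdsGT (by positivity)
    filter_upwards [hmem] with ε hε
    obtain ⟨hε0, hε1⟩ := hε
    rw [lt_min_iff, lt_div_iff₀ (by positivity)] at hε1
    obtain ⟨hε1, hε2⟩ := hε1
    apply setLIntegral_mono' measurableSet_Ioi
    intro s hs
    have hs0 : 0 < s := hs
    apply ENNReal.ofReal_le_ofReal
    obtain ⟨x, rfl⟩ : ∃ x, s = ε * x := ⟨s / ε, by field_simp⟩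
    have hx : 0 < x := pos_of_mul_pos_right hs0 hε0.le
    have hxx : ε * x / ε = x := by field_simp
    rw [hxx]
    have h1 := hmu x hx.le
    have h2 := hint (ε * x) hs0.le
    have h3 : x ^ 2 ≤ 32 / δ ^ 2 * Real.exp (δ / 4 * x) := by
      have := Real.quadratic_le_exp_of_nonneg (x := δ / 4 * x) (by positivity)
      have h4 : (δ / 4 * x) ^ 2 / 2 ≤ Real.exp (δ / 4 * x) := by
        have : 0 < δ / 4 * x := by positivity
        linarith
      rw [div_mul_eq_mul_div, le_div_iff₀ (by positivity)]
      nlinarith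
    calc 1 / ε ^ 2 * μ x * ‖∫ r in (0 : ℝ)..(ε * x), f r‖ ^ 2
        ≤ 1 / ε ^ 2 * (μ 0 * Real.exp (-(δ * x))) *
            (K * Real.exp (δ₀ * (ε * x)) * (ε * x)) ^ 2 := by gcongr
      _ = μ 0 * K ^ 2 * Real.exp (-(δ * x)) * Real.exp (δ₀ * (ε * x)) ^ 2 * x ^ 2 := by
          field_simp
      _ ≤ μ 0 * K ^ 2 * Real.exp (-(δ * x)) * Real.exp (δ₀ * (ε * x)) ^ 2 *
            (32 / δ ^ 2 * Real.exp (δ / 4 * x)) := by gcongr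
      _ = C * (Real.exp (-(δ * x)) * Real.exp (δ₀ * (ε * x)) ^ 2 * Real.exp (δ / 4 * x)) := by
          rw [hC]; ring
      _ ≤ C * Real.exp (-(δ / 4) * (ε * x)) := by
          apply mul_le_mul_of_nonneg_left _ hC0
          rw [← Real.exp_nat_mul, ← Real.exp_add, ← Real.exp_add, Real.exp_le_exp]
          push_cast
          have a1 : ε * (4 * δ₀) * x ≤ δ * x := by gcongr
          have a2 : δ * (ε * x) ≤ δ * (1 * x) := by gcongr
          linarith
  have hfin : (∫⁻ s in Set.Ioi (0 : ℝ), ENNReal.ofReal (C * Real.exp (-(δ / 4) * s))) < ⊤ := by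
    have hi : IntegrableOn (fun s => C * Real.exp (-(δ / 4) * s)) (Set.Ioi 0) :=
      (integrableOn_exp_mul_Ioi (by linarith) 0).const_mul C
    exact hi.lintegral_lt_top
  exact (limsup_le_of_le (by isBoundedDefault) hbd).trans_lt hfin
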